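/- Let C be a triangulated category, B a weakly negative set of objects of C, and 𝔻 the triangulated subcategory of C generated by B. Let n be an integer, X an object of C with Hom(X, Z) = 0 for all Z ∈ B_{≥1}, and Y an object of C with Hom(Z, Y) = 0 for all Z ∈ B_{≤ n−2}. Then any morphism e : X → Y in the Verdier quotient C/𝔻 can be presented as h ∘ q⁻¹ for some object Z of C, h ∈ C(Z, Y) and q ∈ C(Z, X) such that Cone(q) ∈ B_{[n,0]}. -/

import Mathlib

open CategoryTheory Limits Pretriangulated ZeroObject

universe v u v' u'

section TriangulatedPrelude

variable {C : Type u} [Category.{v} C] [HasZeroObject C] [HasShift C ℤ] [Preadditive C]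
  [∀ n : ℤ, (shiftFunctor C n).Additive] [Pretriangulated C]

/-- The objects of the smallest strict full triangulated subcategory of `C`
containing the set of objects `B`. -/
inductive genSub (B : Set C) : C → Prop
  | of (X : C) (hX : X ∈ B) : genSub B X
  | zero (X : C) (hX : IsZero X) : genSub B X
  | shift (X : C) (n : ℤ) (hX : genSub B X) : genSub B (X⟦n⟧)
  | ext₂ (T : Triangle C) (hT : T ∈ distTriang C) (h₁ : genSub B T.obj₁)
      (h₃ : genSub B T.obj₃) : genSub B T.obj₂

/-- The triangulated subcategory of `C` generated by `B`. -/
def genSubcat (B : Set C) : {P : ObjectProperty C // P.IsTriangulated} :=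
  ⟨genSub B,
    { exists_zero := ⟨0, isZero_zero _, genSub.zero _ (isZero_zero _)⟩
      isStableUnderShiftBy := fun n => ⟨fun X h => genSub.shift X n h⟩
      ext₂' := fun T hT h₁ h₃ =>
        ObjectProperty.le_isoClosure _ _ (genSub.ext₂ T hT h₁ h₃) }⟩

/-- The extension-closure of a class of objects `E`: the smallest class containing `E`
and `0` and such that for any distinguished triangle `X ⟶ Y ⟶ Z` with `X, Z` in the
class, `Y` is also in the class. -/
inductive extClosure (E : Set C) : C → Prop
  | of (X : C) (hX : X ∈ E) : extClosure E X
  | zero (X : C) (hX : IsZero X) : extClosure E X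
  | ext₂ (T : Triangle C) (hT : T ∈ distTriang C) (h₁ : extClosure E T.obj₁)
      (h₃ : extClosure E T.obj₃) : extClosure E T.obj₂

/-- `D_{[i,j]}`: the extension-closure of `∪_{i ≤ l ≤ j} D[l]`. -/
def shiftClosure (D : Set C) (i j : ℤ) : Set C :=
  extClosure {X | ∃ (Y : C) (l : ℤ), i ≤ l ∧ l ≤ j ∧ Y ∈ D ∧ X = Y⟦l⟧}

/-- `D_{≥ i} = ∪_{k ≥ i} D_{[i,k]}`. -/
def shiftClosureGE (D : Set C) (i : ℤ) : Set C := {X | ∃ k, i ≤ k ∧ X ∈ shiftClosure D i k}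

/-- `D_{≤ j} = ∪_{k ≤ j} D_{[k,j]}`. -/
def shiftClosureLE (D : Set C) (j : ℤ) : Set C := {X | ∃ k, k ≤ j ∧ X ∈ shiftClosure D k j}

/-- A set of objects `D` is weakly negative if `0 ∈ D` and `Hom(X, Y[i]) = 0`
for all `X, Y ∈ D` and all `i ≥ 2`. -/
def WeaklyNegative (D : Set C) : Prop :=
  (0 : C) ∈ D ∧ ∀ X ∈ D, ∀ Y ∈ D, ∀ i : ℤ, 2 ≤ i → ∀ f : X ⟶ (Y⟦i⟧), f = 0

end TriangulatedPrelude

/-!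
Write `e` as a fraction `f ∘ s⁻¹` with `Cone(s) ∈ 𝔻`. Every object of `𝔻` lies in some `B_{[i,j]}`,
and weak negativity lets one reorder extensions by increasing shift: each object of `B_{[i,j]}` is
an extension of an object of `B_{[k+1,j]}` by one of `B_{[i,k]}`, for any `k`. Since `X` has no
nonzero morphisms to `B_{≥ 1}`, the map `X ⟶ Cone(s)` factors through the part in `B_{[i,0]}`, and
this refines the denominator to one with cone in `B_{[i,0]}`. By the octahedral axiom, a denominator
with cone in `B_{[i,0]}` factors through one with cone in `B_{[n,0]}`, via a morphism whose fibre
lies in `B_{[i-1,n-2]}`; the numerator extends along it, as there are no nonzero morphisms from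
`B_{≤ n-2}` to `Y`.
-/

section

open ObjectProperty

lemma map_comp_eq_map_of_precomp {𝒞 𝒟 : Type*} [Category* 𝒞] [Category* 𝒟] (L : 𝒞 ⥤ 𝒟)
    {X Y Z Z' : 𝒞} {m : Z ⟶ Z'} {q : Z' ⟶ X} {h : Z' ⟶ Y} {e : L.obj X ⟶ L.obj Y}
    [IsIso (L.map q)] [IsIso (L.map (m ≫ q))] (he : L.map (m ≫ q) ≫ e = L.map (m ≫ h)) :
    L.map q ≫ e = L.map h := by
  have : IsIso (L.map m ≫ L.map q) := by rwa [← L.map_comp]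
  have : IsIso (L.map m) := IsIso.of_isIso_comp_right _ (L.map q)
  rw [← cancel_epi (L.map m), ← Category.assoc, ← L.map_comp, he, L.map_comp]

variable {C : Type u} [Category.{v} C] [HasShift C ℤ] [Preadditive C]
  [∀ n : ℤ, (shiftFunctor C n).Additive]

lemma eq_zero_of_forall_shift_sub_eq_zero {X Y : C} {l l' : ℤ}
    (h : ∀ g : X ⟶ Y⟦l' - l⟧, g = 0) (f : X⟦l⟧ ⟶ Y⟦l'⟧) : f = 0 := by
  let e : Y⟦l'⟧ ≅ Y⟦l' - l⟧⟦l⟧ :=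
    (shiftFunctorAdd' C (l' - l) l l' (sub_add_cancel l' l)).app Y
  obtain ⟨g, hg⟩ := (shiftFunctor C l).map_surjective (f ≫ e.hom)
  rw [← cancel_mono e.hom, ← hg, h g, Functor.map_zero, zero_comp]

variable [HasZeroObject C] [Pretriangulated C]

lemma isClosedUnderIsomorphisms_of_ext₂ {P : ObjectProperty C} (hzero : P 0)
    (hext : ∀ T ∈ distTriang C, P T.obj₁ → P T.obj₃ → P T.obj₂) :
    P.IsClosedUnderIsomorphisms where
  of_iso {X Y} e hX := by
    have hT : Triangle.mk e.hom (0 : Y ⟶ 0) 0 ∈ distTriang C :=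
      (Triangle.distinguished_iff_of_isZero₃ _ (isZero_zero C)).2 (inferInstanceAs (IsIso e.hom))
    exact hext _ hT hX hzero

instance (P : ObjectProperty C) (m : ℤ) [P.IsClosedUnderIsomorphisms] [P.ContainsZero] :
    (P.shift m).ContainsZero where
  exists_zero :=
    ⟨0, isZero_zero C, P.prop_of_isZero (Functor.map_isZero (shiftFunctor C m) (isZero_zero C))⟩

instance (P : ObjectProperty C) (m : ℤ) [P.IsClosedUnderIsomorphisms]
    [P.IsTriangulatedClosed₂] : (P.shift m).IsTriangulatedClosed₂ :=
  .mk' fun T hT h₁ h₃ =>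
    P.ext_of_isTriangulatedClosed₂ _ (Triangle.shift_distinguished T hT m) h₁ h₃

lemma extensionProduct_le_swap {P Q : ObjectProperty C}
    (h : ∀ ⦃Y Z : C⦄, P Y → Q Z → ∀ f : Z ⟶ Y⟦(1 : ℤ)⟧, f = 0) :
    extensionProduct P Q ≤ extensionProduct Q P := by
  rintro X ⟨Y, Z, _, _, d, hT, hY, hZ⟩
  obtain ⟨e, -, -⟩ := exists_iso_binaryBiproduct_of_distTriang _ hT (h hY hZ d)
  exact ObjectProperty.prop_of_iso _ (biprod.braiding Z Y ≪≫ e.symm)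
    ⟨_, _, _, _, _, binaryBiproductTriangle_distinguished Z Y, hZ, hY⟩

lemma isTriangulatedClosed₂_extensionProduct [IsTriangulated C] {P Q : ObjectProperty C}
    [P.IsTriangulatedClosed₂] [P.IsClosedUnderIsomorphisms]
    [Q.IsTriangulatedClosed₂] [Q.IsClosedUnderIsomorphisms]
    (h : extensionProduct Q P ≤ extensionProduct P Q) :
    (extensionProduct P Q).IsTriangulatedClosed₂ := by
  have key : extensionProduct (extensionProduct P Q) (extensionProduct P Q) ≤
      extensionProduct P Q :=
    calc extensionProduct (extensionProduct P Q) (extensionProduct P Q)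
      _ = extensionProduct P (extensionProduct (extensionProduct Q P) Q) := by
        simp only [extensionProduct_assoc]
      _ ≤ extensionProduct P (extensionProduct (extensionProduct P Q) Q) :=
        monotone_extensionProduct_right _ (monotone_extensionProduct_left _ h)
      _ = extensionProduct (extensionProduct P P) (extensionProduct Q Q) := by
        simp only [extensionProduct_assoc]
      _ ≤ extensionProduct P (extensionProduct Q Q) :=
        monotone_extensionProduct_left _
          (extensionProduct_le_of_isTriangulatedClosed₂ le_rfl le_rfl)
      _ ≤ extensionProduct P Q :=
        monotone_extensionProduct_right _
          (extensionProduct_le_of_isTriangulatedClosed₂ le_rfl le_rfl)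
  exact .mk' fun T hT h₁ h₃ => key _ ⟨_, _, _, _, _, hT, h₁, h₃⟩

lemma exists_trW_comp_of_leftOrthogonal {P Q : ObjectProperty C} {X Z : C} {s : Z ⟶ X}
    (hs : (extensionProduct P Q).trW s) (hX : Q.leftOrthogonal X) :
    ∃ (Z' : C) (t : Z' ⟶ Z), P.trW (t ≫ s) := by
  obtain ⟨W, a, b, hT, W₀, W₁, p, r, d, hW, hW₀, hW₁⟩ := hs
  obtain ⟨a', ha'⟩ : ∃ a' : X ⟶ W₀, a = a' ≫ p :=
    Triangle.coyoneda_exact₂ _ hW a (hX (a ≫ r) hW₁)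
  obtain ⟨Z', s', c', hT'⟩ := distinguished_cocone_triangle₁ a'
  obtain ⟨t, ht, -⟩ : ∃ t : Z' ⟶ Z, s' ≫ 𝟙 X = t ≫ s ∧ _ :=
    complete_distinguished_triangle_morphism₁ _ _ hT' hT (𝟙 X) p
      (ha'.symm.trans (Category.id_comp a).symm)
  refine ⟨Z', t, ?_⟩
  rw [← ht, Category.comp_id]
  exact ⟨_, _, _, hT', hW₀⟩

lemma exists_fac_trW_of_shift_eq_zero [IsTriangulated C] {P Q : ObjectProperty C} {X Y Z : C}
    {s : Z ⟶ X} (hs : (extensionProduct P Q).trW s) (f : Z ⟶ Y)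
    (hY : ∀ A, P A → ∀ g : A⟦(-1 : ℤ)⟧ ⟶ Y, g = 0) :
    ∃ (Z' : C) (m : Z ⟶ Z') (q : Z' ⟶ X) (h : Z' ⟶ Y),
      Q.trW q ∧ m ≫ q = s ∧ m ≫ h = f := by
  obtain ⟨W, a, b, hT, A, W', p, r, d, hW, hA, hW'⟩ := hs
  obtain ⟨Z', q, c, hq⟩ := distinguished_cocone_triangle₁ (a ≫ r)
  let o := Triangulated.someOctahedron' rfl hT hW hq
  obtain ⟨h, hh⟩ : ∃ h : Z' ⟶ Y, f = o.m₁ ≫ h :=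
    Triangle.yoneda_exact₂ _ (inv_rot_of_distTriang _ o.mem) f (hY A hA _)
  exact ⟨Z', o.m₁, q, h, ⟨_, _, _, hq, hW'⟩, o.comm₁, hh.symm⟩

instance (E : Set C) : ObjectProperty.ContainsZero (extClosure E) :=
  ⟨0, isZero_zero C, extClosure.zero _ (isZero_zero C)⟩

instance (E : Set C) : ObjectProperty.IsClosedUnderIsomorphisms (extClosure E) :=
  isClosedUnderIsomorphisms_of_ext₂ (extClosure.zero _ (isZero_zero C)) extClosure.ext₂

instance (E : Set C) : ObjectProperty.IsTriangulatedClosed₂ (extClosure E) :=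
  .mk' extClosure.ext₂

lemma extClosure_le {E : Set C} {P : ObjectProperty C} [P.ContainsZero]
    [P.IsClosedUnderIsomorphisms] [P.IsTriangulatedClosed₂] (h : ∀ X ∈ E, P X) :
    extClosure E ≤ P := by
  intro X hX
  induction hX with
  | of X hX => exact h X hX
  | zero X hX => exact P.prop_of_isZero hX
  | ext₂ T hT _ _ h₁ h₃ => exact P.ext_of_isTriangulatedClosed₂ T hT h₁ h₃

/-- The class `B_{[i,j]}` as an `ObjectProperty`, so that extension products, orthogonals and
classes of morphisms with prescribed cones make sense for it. -/
def shiftClosureProp (B : Set C) (i j : ℤ) : ObjectProperty C := (· ∈ shiftClosure B i j)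

namespace shiftClosureProp

variable {B : Set C} {i j i' j' : ℤ}

instance : (shiftClosureProp B i j).ContainsZero :=
  inferInstanceAs (ObjectProperty.ContainsZero (extClosure _))

instance : (shiftClosureProp B i j).IsClosedUnderIsomorphisms :=
  inferInstanceAs (ObjectProperty.IsClosedUnderIsomorphisms (extClosure _))

instance : (shiftClosureProp B i j).IsTriangulatedClosed₂ :=
  inferInstanceAs (ObjectProperty.IsTriangulatedClosed₂ (extClosure _))

lemma of_shift {Y : C} {l : ℤ} (hi : i ≤ l) (hj : l ≤ j) (hY : Y ∈ B) :
    shiftClosureProp B i j (Y⟦l⟧) :=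
  extClosure.of _ ⟨Y, l, hi, hj, hY, rfl⟩

lemma le_of_forall_shift {P : ObjectProperty C} [P.ContainsZero]
    [P.IsClosedUnderIsomorphisms] [P.IsTriangulatedClosed₂]
    (h : ∀ Y ∈ B, ∀ l, i ≤ l → l ≤ j → P (Y⟦l⟧)) : shiftClosureProp B i j ≤ P :=
  extClosure_le (by rintro _ ⟨Y, l, hi, hj, hY, rfl⟩; exact h Y hY l hi hj)

lemma mono (hi : i' ≤ i) (hj : j ≤ j') : shiftClosureProp B i j ≤ shiftClosureProp B i' j' :=
  le_of_forall_shift fun _ hY _ hil hlj => of_shift (hi.trans hil) (hlj.trans hj) hY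

lemma le_shift_add (m : ℤ) :
    shiftClosureProp B i j ≤ (shiftClosureProp B (i + m) (j + m)).shift m :=
  le_of_forall_shift fun Y hY l hil hlj =>
    (shiftClosureProp B (i + m) (j + m)).prop_of_iso ((shiftFunctorAdd C l m).app Y)
      (of_shift (add_le_add_left hil m) (add_le_add_left hlj m) hY)

lemma le_shiftClosureGE : shiftClosureProp B i j ≤ (· ∈ shiftClosureGE B i) := fun _ hX =>
  ⟨max i j, le_max_left i j, mono le_rfl (le_max_right i j) _ hX⟩

lemma le_shiftClosureLE : shiftClosureProp B i j ≤ (· ∈ shiftClosureLE B j) := fun _ hX =>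
  ⟨min i j, min_le_right i j, mono (min_le_left i j) le_rfl _ hX⟩

end shiftClosureProp

instance (B : Set C) : (genSubcat B).1.IsClosedUnderIsomorphisms :=
  isClosedUnderIsomorphisms_of_ext₂ (genSub.zero _ (isZero_zero C)) genSub.ext₂

instance (B : Set C) : (genSubcat B).1.IsTriangulated := (genSubcat B).2

lemma shiftClosureProp_le_genSubcat (B : Set C) (i j : ℤ) :
    shiftClosureProp B i j ≤ (genSubcat B).1 :=
  shiftClosureProp.le_of_forall_shift fun Y hY l _ _ => genSub.shift Y l (genSub.of Y hY)

lemma exists_shiftClosureProp_of_genSubcat {B : Set C} {X : C} (hX : (genSubcat B).1 X) :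
    ∃ i j : ℤ, shiftClosureProp B i j X := by
  change genSub B X at hX
  induction hX with
  | of X hX =>
    exact ⟨0, 0, ObjectProperty.prop_of_iso _ ((shiftFunctorZero C ℤ).app X)
      (shiftClosureProp.of_shift le_rfl le_rfl hX)⟩
  | zero X hX => exact ⟨0, 0, ObjectProperty.prop_of_isZero _ hX⟩
  | shift X m _ ih =>
    obtain ⟨i, j, h⟩ := ih
    exact ⟨i + m, j + m, shiftClosureProp.le_shift_add m _ h⟩
  | ext₂ T hT _ _ ih₁ ih₃ =>
    obtain ⟨i, j, h₁⟩ := ih₁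
    obtain ⟨i', j', h₃⟩ := ih₃
    exact ⟨min i i', max j j', ObjectProperty.ext_of_isTriangulatedClosed₂ _ T hT
      (shiftClosureProp.mono (min_le_left _ _) (le_max_left _ _) _ h₁)
      (shiftClosureProp.mono (min_le_right _ _) (le_max_right _ _) _ h₃)⟩

lemma exists_trW_shiftClosureProp_of_trW_genSubcat {B : Set C} {X Y : C} {s : X ⟶ Y}
    (hs : (genSubcat B).1.trW s) : ∃ i j : ℤ, (shiftClosureProp B i j).trW s := by
  obtain ⟨W, a, b, hT, hW⟩ := hs
  obtain ⟨i, j, hW⟩ := exists_shiftClosureProp_of_genSubcat hW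
  exact ⟨i, j, W, a, b, hT, hW⟩

namespace WeaklyNegative

variable {B : Set C}

lemma shiftClosureProp_le_leftOrthogonal (hB : WeaklyNegative B) {i j i' j' : ℤ}
    (h : j + 2 ≤ i') : shiftClosureProp B i j ≤ (shiftClosureProp B i' j').leftOrthogonal := by
  refine shiftClosureProp.le_of_forall_shift fun X hX l _ hlj Y f hY => ?_
  suffices shiftClosureProp B i' j' ≤ (ObjectProperty.singleton (X⟦l⟧)).rightOrthogonal from
    this Y hY f (by simp)
  refine shiftClosureProp.le_of_forall_shift ?_
  rintro Z hZ l' hil' - _ f ⟨⟩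
  exact eq_zero_of_forall_shift_sub_eq_zero (hB.2 X hX Z hZ (l' - l) (by lia)) f

lemma shiftClosureProp_le_extensionProduct [IsTriangulated C] (hB : WeaklyNegative B)
    (i j : ℤ) {k l : ℤ} (hkl : k + 1 = l) :
    shiftClosureProp B i j ≤
      extensionProduct (shiftClosureProp B i k) (shiftClosureProp B l j) := by
  have hswap : extensionProduct (shiftClosureProp B l j) (shiftClosureProp B i k) ≤
      extensionProduct (shiftClosureProp B i k) (shiftClosureProp B l j) :=
    extensionProduct_le_swap fun Y Z hY hZ f =>
      hB.shiftClosureProp_le_leftOrthogonal (by lia) Z hZ f (shiftClosureProp.le_shift_add 1 Y hY)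
  have := isTriangulatedClosed₂_extensionProduct hswap
  have : (extensionProduct (shiftClosureProp B i k) (shiftClosureProp B l j)).ContainsZero :=
    ⟨0, isZero_zero C, le_extensionProduct_left _ _ (ObjectProperty.prop_zero _)⟩
  refine shiftClosureProp.le_of_forall_shift fun Y hY m him hmj => ?_
  obtain hmk | hkm := le_or_gt m k
  · exact le_extensionProduct_left _ _ (shiftClosureProp.of_shift him hmk hY)
  · exact le_extensionProduct_right _ _ (shiftClosureProp.of_shift (by lia) hmj hY)

end WeaklyNegative

end

/-- Proposition: presentation of morphisms in the Verdier quotient `C/𝔻` as roofs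
`h ∘ q⁻¹` with `Cone(q) ∈ B_{[n,0]}`. -/
theorem statement5 {C : Type u} [Category.{v} C] [HasZeroObject C] [HasShift C ℤ]
    [Preadditive C] [∀ n : ℤ, (shiftFunctor C n).Additive] [Pretriangulated C]
    [IsTriangulated C] (B : Set C) (hB : WeaklyNegative B) (n : ℤ) (X Y : C)
    (hX : ∀ Z ∈ shiftClosureGE B 1, ∀ f : X ⟶ Z, f = 0)
    (hY : ∀ Z ∈ shiftClosureLE B (n - 2), ∀ f : Z ⟶ Y, f = 0)
    (e : (genSubcat B).1.trW.Q.obj X ⟶ (genSubcat B).1.trW.Q.obj Y) :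
    ∃ (Z : C) (h : Z ⟶ Y) (q : Z ⟶ X),
      (∃ (W : C) (a : X ⟶ W) (b : W ⟶ Z⟦(1 : ℤ)⟧),
        (Triangle.mk q a b ∈ distTriang C) ∧ W ∈ shiftClosure B n 0) ∧
      IsIso ((genSubcat B).1.trW.Q.map q) ∧
      (genSubcat B).1.trW.Q.map q ≫ e = (genSubcat B).1.trW.Q.map h := by
  let L := (genSubcat B).1.trW.Q
  have isIso_map {i j : ℤ} {V V' : C} {s : V ⟶ V'} (hs : (shiftClosureProp B i j).trW s) :
      IsIso (L.map s) :=
    Localization.inverts L _ s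
      (ObjectProperty.trW_monotone (shiftClosureProp_le_genSubcat B i j) s hs)
  obtain ⟨φ, rfl⟩ := Localization.exists_rightFraction L (genSubcat B).1.trW e
  obtain ⟨i, j, hs⟩ := exists_trW_shiftClosureProp_of_trW_genSubcat φ.hs
  obtain ⟨Z₀, t, hts⟩ := exists_trW_comp_of_leftOrthogonal
    (ObjectProperty.trW_monotone (hB.shiftClosureProp_le_extensionProduct i j (zero_add 1)) _ hs)
    fun W f hW => hX W (shiftClosureProp.le_shiftClosureGE W hW) f
  have hY' (A : C) (hA : shiftClosureProp B i (n - 1) A) (g : A⟦(-1 : ℤ)⟧ ⟶ Y) : g = 0 :=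
    hY _ (shiftClosureProp.le_shiftClosureLE _ (shiftClosureProp.mono le_rfl (by lia) _
      (shiftClosureProp.le_shift_add (-1) A hA))) g
  obtain ⟨Z, m, q, h, hq, hmq, hmh⟩ := exists_fac_trW_of_shift_eq_zero
    (ObjectProperty.trW_monotone
      (hB.shiftClosureProp_le_extensionProduct i 0 (sub_add_cancel n 1)) _ hts)
    (t ≫ φ.f) hY'
  have : IsIso (L.map (m ≫ q)) := hmq ▸ isIso_map hts
  have hq_iso : IsIso (L.map q) := isIso_map hq
  obtain ⟨W, a, b, hT, hW⟩ := hq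
  refine ⟨Z, h, q, ⟨W, a, b, hT, hW⟩, hq_iso, map_comp_eq_map_of_precomp L (m := m) ?_⟩
  rw [hmq, hmh, L.map_comp, L.map_comp, Category.assoc, φ.map_s_comp_map]
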